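/- Let s be a term over T_Σ(V), ⟨S,R⟩ a set of terms with restricted regular constraints with R = ⟨A,V,C,W,h⟩, and suppose s is determined at all non-variable positions of the terms in S. Let S_3 = {t ∈ S | t structurally subsumes s with respect to R}. Then every instance of ⟨{s},R⟩ that belongs to L(⟨S,R⟩) belongs to L(⟨S_3,R⟩); consequently L(⟨{s},R⟩) − L(⟨S,R⟩) = L(⟨{s},R⟩) − L(⟨S_3,R⟩). -/

import Mathlib

namespace RITRC

/-- Terms over a signature (symbols `F` with arities `ar`) with variables in `V`. -/
inductive Term (F : Type) (ar : F → ℕ) (V : Type) : Type where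
  | var : V → Term F ar V
  | app : (f : F) → (Fin (ar f) → Term F ar V) → Term F ar V

/-- Ground terms (terms without variables). -/
abbrev GTerm (F : Type) (ar : F → ℕ) : Type := Term F ar Empty

variable {F V V' Q : Type} {ar : F → ℕ}

/-- Applying a substitution to a term. -/
def Term.subst (φ : V → Term F ar V') : Term F ar V → Term F ar V'
  | .var x => φ x
  | .app f ts => .app f (fun i => (ts i).subst φ)

/-- The height of a term. -/
def Term.height : Term F ar V → ℕ
  | .var _ => 0
  | .app _ ts => Finset.univ.sup (fun i => (ts i).height + 1)

/-- The size of a term. -/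
def Term.size : Term F ar V → ℕ
  | .var _ => 1
  | .app _ ts => 1 + ∑ i, (ts i).size

/-- The subterm of a term at a position (a list of child indices), if it exists. -/
def Term.sub : Term F ar V → List ℕ → Option (Term F ar V)
  | t, [] => some t
  | .var _, _ :: _ => none
  | .app f ts, i :: p => if h : i < ar f then (ts ⟨i, h⟩).sub p else none

/-- The root symbol of a term: a function symbol or a variable. -/
def Term.rootSym : Term F ar V → F ⊕ V
  | .var x => .inr x
  | .app f _ => .inl f

/-- `p` is a position of `t`. -/
def Term.isPos (t : Term F ar V) (p : List ℕ) : Prop := t.sub p ≠ none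

/-- `p` is a variable position of `t`. -/
def Term.isVarPos (t : Term F ar V) (p : List ℕ) : Prop :=
  ∃ x, t.sub p = some (Term.var x)

/-- `p` is a non-variable position of `t`. -/
def Term.isNonVarPos (t : Term F ar V) (p : List ℕ) : Prop :=
  ∃ f ts, t.sub p = some (Term.app f ts)

/-- The variable `x` occurs in `t`. -/
def Term.varOccurs (t : Term F ar V) (x : V) : Prop :=
  ∃ p, t.sub p = some (Term.var x)

/-- The variable `x` occurs at least twice in `t`. -/
def Term.occursTwice (t : Term F ar V) (x : V) : Prop :=
  ∃ p q, p ≠ q ∧ t.sub p = some (Term.var x) ∧ t.sub q = some (Term.var x)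

/-- `t` is determined at position `p`: either `p` is a non-variable position
of `t`, or some prefix of `p` is labeled by a constant symbol. -/
def Term.determinedAt (t : Term F ar V) (p : List ℕ) : Prop :=
  t.isNonVarPos p ∨ ∃ p', p' <+: p ∧ ∃ f ts, t.sub p' = some (Term.app f ts) ∧ ar f = 0

/-- A deterministic tree automaton: at most one transition `f(q₁,…,qₖ) → q`
for every `f` and states `q₁,…,qₖ`. -/
structure DTA (F : Type) (ar : F → ℕ) (Q : Type) : Type where
  δ : (f : F) → (Fin (ar f) → Q) → Option Q

/-- Collect a family of optional values into an optional family. -/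
def allSome {n : ℕ} {α : Type} (g : Fin n → Option α) : Option (Fin n → α) :=
  if h : ∀ i, (g i).isSome then some (fun i => (g i).get (h i)) else none

/-- The state reached by `A` on a term, where variables are pre-assigned states by `C`. -/
def DTA.runC (A : DTA F ar Q) (C : V → Q) : Term F ar V → Option Q
  | .var x => some (C x)
  | .app f ts => (allSome (fun i => A.runC C (ts i))).bind (A.δ f)

/-- The state reached by `A` on a ground term. -/
def DTA.run (A : DTA F ar Q) : GTerm F ar → Option Q :=
  A.runC (fun x => x.elim)

/-- `L(A,q)`: the set of ground terms on which `A` reaches state `q`. -/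
def DTA.lang (A : DTA F ar Q) (q : Q) : Set (GTerm F ar) :=
  {t | A.run t = some q}

/-- `A` is complete. -/
def DTA.Complete (A : DTA F ar Q) : Prop :=
  ∀ (f : F) (qs : Fin (ar f) → Q), (A.δ f qs).isSome

/-- `A` is a 1-or-n DTA: each state has exactly one, or at least `n`, terms. -/
def DTA.OneOr (A : DTA F ar Q) (n : ℕ) : Prop :=
  ∀ q : Q, (A.lang q).encard = 1 ∨ (n : ℕ∞) ≤ (A.lang q).encard

/-- The number of transitions of a DTA. -/
noncomputable def DTA.numTrans [Fintype F] [Fintype Q] (A : DTA F ar Q) : ℕ :=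
  ∑ f : F, ∑ qs : Fin (ar f) → Q, if (A.δ f qs).isSome then 1 else 0

/-- A set of ground terms is regular if it is recognized by some (finite) DTA. -/
def IsRegular (L : Set (GTerm F ar)) : Prop :=
  ∃ (Q : Type) (_ : Fintype Q) (A : DTA F ar Q) (Facc : Set Q),
    L = {t | ∃ q ∈ Facc, A.run t = some q}

/-- A DTA bundled with its (finite) state type and accepting states. -/
structure NDTA (F : Type) (ar : F → ℕ) : Type 1 where
  Q : Type
  fin : Fintype Q
  A : DTA F ar Q
  acc : Set Q

/-- The language recognized by a bundled DTA. -/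
def NDTA.lang (N : NDTA F ar) : Set (GTerm F ar) :=
  {t | ∃ q ∈ N.acc, N.A.run t = some q}

/-- The size of a bundled DTA: number of states plus sum of sizes of transitions. -/
noncomputable def NDTA.size [Fintype F] (N : NDTA F ar) : ℕ :=
  letI := N.fin
  Fintype.card N.Q +
    ∑ f : F, ∑ qs : Fin (ar f) → N.Q, if (N.A.δ f qs).isSome then ar f + 2 else 0

/-- `L(⟨S,M⟩)`: the language of a set of terms `S` with regular constraints `M`. -/
def langM (S : Set (Term F ar V)) (M : V → NDTA F ar) : Set (GTerm F ar) :=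
  {t | ∃ s ∈ S, ∃ φ : V → GTerm F ar, (∀ x, φ x ∈ (M x).lang) ∧ t = s.subst φ}

/-- `L(⟨S,R⟩)` for a single regular constraint `R = ⟨A,C⟩`. -/
def langSingle (S : Set (Term F ar V)) (A : DTA F ar Q) (C : V → Q) :
    Set (GTerm F ar) :=
  {t | ∃ s ∈ S, ∃ φ : V → GTerm F ar, (∀ x, A.run (φ x) = some (C x)) ∧ t = s.subst φ}

/-- A restricted regular constraint `R = ⟨A,V,C,W,h⟩`. -/
structure RRC (F : Type) (ar : F → ℕ) (V Q : Type) : Type where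
  A : DTA F ar Q
  C : V → Q
  W : Set V
  hgt : ℕ

/-- A solution of a restricted regular constraint. -/
def RRC.IsSolution (R : RRC F ar V Q) (φ : V → GTerm F ar) : Prop :=
  (∀ x, R.A.run (φ x) = some (R.C x)) ∧ ∀ x ∈ R.W, (φ x).height ≤ R.hgt

/-- `L(⟨S,R⟩)` for a restricted regular constraint `R`. -/
def RRC.lang (R : RRC F ar V Q) (S : Set (Term F ar V)) : Set (GTerm F ar) :=
  {t | ∃ s ∈ S, ∃ φ, R.IsSolution φ ∧ t = s.subst φ}

/-- Renaming the variables of a term. -/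
def Term.rename (ρ : V → V') (t : Term F ar V) : Term F ar V' :=
  t.subst (fun x => Term.var (ρ x))

/-- `s` and `t` are structurally similar: `t` is obtained from `s` by an
injective variable renaming. -/
def StructSim (s : Term F ar V) (t : Term F ar V') : Prop :=
  ∃ ρ : V → V', Function.Injective ρ ∧ t = s.rename ρ

/-- `s` and `t` are structurally equal with respect to the state assignment `C`. -/
def StructEq (C : V → Q) (s t : Term F ar V) : Prop :=
  StructSim s t ∧
    ∀ p x y, s.sub p = some (Term.var x) → t.sub p = some (Term.var y) → C x = C y

/-- `s` is structurally subsumed by `t` (with respect to `A` and `C`). -/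
def StructSub (A : DTA F ar Q) (C : V → Q) (s t : Term F ar V) : Prop :=
  (∀ p f ts, t.sub p = some (Term.app f ts) →
    ∃ sp, s.sub p = some sp ∧ sp.rootSym = Sum.inl f) ∧
  (∀ p tp, t.sub p = some tp → ∃ sp, s.sub p = some sp ∧ A.runC C tp = A.runC C sp)

/-- Building a binary term `f(t,u)` from a symbol of arity 2. -/
def mkBin {f : F} (h : ar f = 2) (t u : Term F ar V) : Term F ar V :=
  Term.app f (fun i => if (i : ℕ) = 0 then t else u)

/-- `s` satisfies the infinite-instances property in `⟨S,R⟩`. -/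
def InfiniteInstances (R : RRC F ar V Q) (S : Set (Term F ar V)) (s : Term F ar V) :
    Prop :=
  ∃ x, s.occursTwice x ∧
    ∃ φ : ℕ → (V → GTerm F ar),
      (∀ i, R.IsSolution (φ i)) ∧
      (∀ i, s.subst (φ i) ∉ R.lang (S \ {s})) ∧
      (∀ i j, i ≠ j → φ i x ≠ φ j x)

/-- The set of prefixes of a finite set of positions. -/
def prefixes (P : Finset (List ℕ)) : Finset (List ℕ) :=
  P.biUnion (fun p => p.inits.toFinset)


theorem runC_subst_aux (A : DTA F ar Q) (C : V → Q) (φ : V → GTerm F ar)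
    (h : ∀ x, A.run (φ x) = some (C x)) (s : Term F ar V) :
    A.run (s.subst φ) = A.runC C s := by
  induction s with
  | var x => simpa [Term.subst, DTA.runC] using h x
  | app f ts ih =>
    have : (fun i => A.runC (fun x : Empty => x.elim) ((ts i).subst φ))
        = (fun i => A.runC C (ts i)) := funext ih
    simp only [Term.subst, DTA.runC, DTA.run]
    rw [this]

theorem structSub_aux (A : DTA F ar Q) (C : V → Q) (φ ψ : V → GTerm F ar)
    (hφ : ∀ x, A.run (φ x) = some (C x)) (hψ : ∀ x, A.run (ψ x) = some (C x))
    (t : Term F ar V) : ∀ s : Term F ar V,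
    (∀ p : List ℕ, Term.isNonVarPos t p → s.determinedAt p) →
    s.subst φ = t.subst ψ → StructSub A C s t := by
  induction t with
  | var x =>
    intro s _ he
    have hr : A.runC C (Term.var x) = A.runC C s := by
      rw [← runC_subst_aux A C φ hφ s, he, runC_subst_aux A C ψ hψ]
    refine ⟨?_, ?_⟩
    · intro p f ts hp
      cases p <;> simp [Term.sub] at hp
    · intro p tp hp
      cases p with
      | nil =>
        simp only [Term.sub, Option.some.injEq] at hp
        subst hp
        exact ⟨s, by simp [Term.sub], hr⟩
      | cons i p => simp [Term.sub] at hp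
  | app f ts ih =>
    intro s hd he
    have hr : A.runC C (Term.app f ts) = A.runC C s := by
      rw [← runC_subst_aux A C φ hφ s, he, runC_subst_aux A C ψ hψ]
    cases s with
    | var y =>
      exfalso
      rcases hd [] ⟨f, ts, by simp [Term.sub]⟩ with ⟨g, ss, h⟩ | ⟨p', hp', g, ss, h, _⟩
      · simp [Term.sub] at h
      · rw [List.prefix_nil] at hp'
        subst hp'
        simp [Term.sub] at h
    | app g ss =>
      simp only [Term.subst, Term.app.injEq] at he
      obtain ⟨hgf, he⟩ := he
      subst hgf
      have he' := congrFun (eq_of_heq he)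
      have key : ∀ i, StructSub A C (ss i) (ts i) := by
        intro i
        refine ih i (ss i) ?_ (he' i)
        rintro p ⟨f', us, hp⟩
        rcases hd (i.1 :: p) ⟨f', us, by simpa [Term.sub] using hp⟩ with
          ⟨k, vs, h⟩ | ⟨p', hp', k, vs, h, h0⟩
        · exact Or.inl ⟨k, vs, by simpa [Term.sub] using h⟩
        · cases p' with
          | nil =>
            simp only [Term.sub, Option.some.injEq, Term.app.injEq] at h
            have := i.2
            have hk : ar g = ar k := congrArg ar h.1
            omega
          | cons j p' =>
            rw [List.cons_prefix_cons] at hp'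
            obtain ⟨rfl, hp'⟩ := hp'
            exact Or.inr ⟨p', hp', k, vs, by simpa [Term.sub] using h, h0⟩
      refine ⟨?_, ?_⟩
      · intro p f' us hp
        cases p with
        | nil =>
          simp only [Term.sub, Option.some.injEq, Term.app.injEq] at hp
          exact ⟨Term.app g ss, by simp [Term.sub], by simp [Term.rootSym, hp.1]⟩
        | cons i p =>
          by_cases hi : i < ar g
          · simp only [Term.sub, hi, dite_true] at hp ⊢
            exact (key ⟨i, hi⟩).1 p f' us hp
          · simp [Term.sub, hi] at hp
      · intro p tp hp
        cases p with
        | nil =>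
          simp only [Term.sub, Option.some.injEq] at hp
          subst hp
          exact ⟨Term.app g ss, by simp [Term.sub], hr⟩
        | cons i p =>
          by_cases hi : i < ar g
          · simp only [Term.sub, hi, dite_true] at hp ⊢
            exact (key ⟨i, hi⟩).2 p tp hp
          · simp [Term.sub, hi] at hp

/-- if `s` is determined at all non-variable positions of the
terms in `S`, and `S₃` is the set of terms of `S` that structurally subsume
`s`, then every instance of `⟨{s},R⟩` lying in `L(⟨S,R⟩)` lies in `L(⟨S₃,R⟩)`;
consequently `L(⟨{s},R⟩) − L(⟨S,R⟩) = L(⟨{s},R⟩) − L(⟨S₃,R⟩)`. -/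
theorem restrict_to_subsumers {F V Q : Type} {ar : F → ℕ}
    [Fintype F] [Fintype Q] [Fintype V]
    (R : RRC F ar V Q) (S : Finset (Term F ar V)) (s : Term F ar V)
    (hdet : ∀ t ∈ S, ∀ p : List ℕ, Term.isNonVarPos t p → s.determinedAt p) :
    (∀ u : GTerm F ar, u ∈ R.lang {s} → u ∈ R.lang ↑S →
      u ∈ R.lang {t : Term F ar V | t ∈ S ∧ StructSub R.A R.C s t}) ∧
    R.lang {s} \ R.lang ↑S =
      R.lang {s} \ R.lang {t : Term F ar V | t ∈ S ∧ StructSub R.A R.C s t} := by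
  have main : ∀ u : GTerm F ar, u ∈ R.lang {s} → u ∈ R.lang ↑S →
      u ∈ R.lang {t : Term F ar V | t ∈ S ∧ StructSub R.A R.C s t} := by
    rintro u ⟨s', hs', φ, hφ, hu⟩ ⟨t, ht, ψ, hψ, hu'⟩
    rw [Set.mem_singleton_iff] at hs'
    subst hs'
    exact ⟨t, ⟨ht, structSub_aux R.A R.C φ ψ hφ.1 hψ.1 t s' (hdet t ht)
      (hu.symm.trans hu')⟩, ψ, hψ, hu'⟩
  refine ⟨main, ?_⟩
  ext u
  constructor
  · rintro ⟨h1, h2⟩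
    refine ⟨h1, fun h3 => h2 ?_⟩
    obtain ⟨t, ht, r⟩ := h3
    exact ⟨t, ht.1, r⟩
  · rintro ⟨h1, h2⟩
    exact ⟨h1, fun h3 => h2 (main u h1 h3)⟩

end RITRC
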